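/- Let P = [a] × [2b] with the described partial order, 1 ≤ t ≤ a-1. The maximal subsets of P containing no (t+1)-chain are exactly the disjoint unions F_1 ∪ ... ∪ F_t of t pairwise disjoint maximal antichains (paths from (1,b+h_i) to (a,h_i)) of P. -/

import Mathlib

/-- A step moves one unit down `(1,0)` or one unit left `(0,-1)`. -/
def Step (p q : ℤ × ℤ) : Prop := q = p + (1, 0) ∨ q = p + (0, -1)

/-- `l` is a path starting at `p` and ending at `q`, each consecutive
difference being `(1,0)` or `(0,-1)`. -/
def IsPathFromTo (l : List (ℤ × ℤ)) (p q : ℤ × ℤ) : Prop :=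
  l.Chain' Step ∧ l.head? = some p ∧ l.getLast? = some q

/-- Membership in the poset `P = [a] × [2b]`, viewed inside `ℤ × ℤ`. -/
def memP (a b : ℕ) (p : ℤ × ℤ) : Prop :=
  1 ≤ p.1 ∧ p.1 ≤ (a : ℤ) ∧ 1 ≤ p.2 ∧ p.2 ≤ 2 * (b : ℤ)

/-- The partial order on `P = [a] × [2b]`:
`(x,y) ⪯ (z,t)` iff `(x,y) = (z,t)`, or `x < z` and `y < t`,
or `y ≤ b`, `t ≥ b+1` and `y < t - b`. -/
def ple (b : ℕ) (p q : ℤ × ℤ) : Prop :=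
  p = q ∨ (p.1 < q.1 ∧ p.2 < q.2) ∨
    (p.2 ≤ (b : ℤ) ∧ (b : ℤ) + 1 ≤ q.2 ∧ p.2 < q.2 - (b : ℤ))

/-!
Identify `p` with `p + (a, -b)`, which turns the strip `1 ≤ x ≤ a` into a cylinder. On `P`, having
`p ≺ q` amounts to `p + (1, 1) ≤ q` up to such translations.

If `F₁, …, F_t` are disjoint paths from `(1, b + hᵢ)` to `(a, hᵢ)`, then each of them is an
antichain, so their union contains no `(t + 1)`-chain. The points of `P` whose `x - y` lies in a
fixed class modulo `a + b` form a chain, and every path meets every class because `x - y` runs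
through `a + b` consecutive integers along it. So a point outside the paths spans a `(t + 1)`-chain
together with the points in which they meet its class.

Conversely, let `S` contain no `(t + 1)`-chain and let `Uᵢ` be the set of points above an `i`-chain
of `S`, enlarged near the top of `P` so that its boundary fits below the `t - i` boundaries that
follow. The boundaries of `U₁, …, U_t` are disjoint paths covering `S`, and by maximality `S` is
their union.
-/

namespace IsPathFromTo

variable {p q x y : ℤ × ℤ} {l : List (ℤ × ℤ)}

theorem start_mem (hl : IsPathFromTo l p q) : p ∈ l :=
  List.mem_of_head? hl.2.1

theorem pairwise (hl : IsPathFromTo l p q) :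
    l.Pairwise fun x y ↦ x.1 ≤ y.1 ∧ y.2 ≤ x.2 := by
  have : IsTrans (ℤ × ℤ) fun x y ↦ x.1 ≤ y.1 ∧ y.2 ≤ x.2 :=
    ⟨fun _ _ _ h h' ↦ ⟨h.1.trans h'.1, h'.2.trans h.2⟩⟩
  refine (hl.1.imp fun x y hxy ↦ ?_).pairwise
  rcases hxy with rfl | rfl <;> simp

theorem le_or_le (hl : IsPathFromTo l p q) (hx : x ∈ l) (hy : y ∈ l) :
    x.1 ≤ y.1 ∧ y.2 ≤ x.2 ∨ y.1 ≤ x.1 ∧ x.2 ≤ y.2 := by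
  let R (x y : ℤ × ℤ) : Prop := x.1 ≤ y.1 ∧ y.2 ≤ x.2 ∨ y.1 ≤ x.1 ∧ x.2 ≤ y.2
  have : Std.Symm R := ⟨fun _ _ ↦ Or.symm⟩
  have hR : l.Pairwise R := hl.pairwise.imp Or.inl
  have hR_all : ∀ ⦃x⦄, x ∈ l → ∀ ⦃y⦄, y ∈ l → R x y :=
    List.Pairwise.forall_of_forall (fun _ _ ↦ Or.inl ⟨le_rfl, le_rfl⟩) hR
  exact hR_all hx hy

theorem mem_bounds (hl : IsPathFromTo l p q) (hx : x ∈ l) :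
    (p.1 ≤ x.1 ∧ x.1 ≤ q.1) ∧ q.2 ≤ x.2 ∧ x.2 ≤ p.2 := by
  have : Std.Refl fun x y : ℤ × ℤ ↦ x.1 ≤ y.1 ∧ y.2 ≤ x.2 := ⟨fun _ ↦ ⟨le_rfl, le_rfl⟩⟩
  have hp := hl.pairwise.rel_head hx
  have hq := hl.pairwise.rel_getLast hx
  rw [(List.head_eq_iff_head?_eq_some _).2 hl.2.1] at hp
  rw [List.getLast_eq_iff_getLast?_eq_some _ |>.2 hl.2.2] at hq
  exact ⟨⟨hp.1, hq.1⟩, hq.2, hp.2⟩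

theorem exists_mem_sub_eq (hl : IsPathFromTo l p q) {c : ℤ} (hpc : p.1 - p.2 ≤ c)
    (hcq : c ≤ q.1 - q.2) : ∃ x ∈ l, x.1 - x.2 = c := by
  induction l generalizing p with
  | nil => simp [IsPathFromTo] at hl
  | cons u l ih =>
    obtain ⟨hchain, hhead, hlast⟩ := hl
    obtain rfl : u = p := by simpa using hhead
    obtain hc | hc := hpc.eq_or_lt
    · exact ⟨u, List.mem_cons_self, hc⟩
    cases l with
    | nil =>
      obtain rfl : u = q := by simpa using hlast
      omega
    | cons v l =>
      obtain ⟨hstep, hchain⟩ := List.isChain_cons_cons.1 hchain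
      have hv : v.1 - v.2 ≤ c := by
        rcases hstep with rfl | rfl <;> simp only [Prod.fst_add, Prod.snd_add] <;> omega
      obtain ⟨x, hx, hxc⟩ := ih ⟨hchain, rfl, by simpa using hlast⟩ hv
      exact ⟨x, List.mem_cons_of_mem u hx, hxc⟩

end IsPathFromTo

theorem isPathFromTo_map_range {f : ℕ → ℤ × ℤ} (hf : ∀ n, Step (f n) (f (n + 1))) (n : ℕ) :
    IsPathFromTo ((List.range (n + 1)).map f) (f 0) (f n) := by
  refine ⟨(List.isChain_map f).2 ?_, by simp [List.head?_range], by simp [List.getLast?_range]⟩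
  exact (List.isChain_range_succ _ n).2 fun m _ ↦ hf m

section Paths

variable {a b : ℕ} {p q : ℤ × ℤ} {h : ℤ} {l : List (ℤ × ℤ)}

theorem IsPathFromTo.memP_of_mem (hl : IsPathFromTo l (1, b + h) (a, h)) (hh : 1 ≤ h ∧ h ≤ b)
    (hp : p ∈ l) : memP a b p := by
  have := hl.mem_bounds hp
  unfold memP
  omega

theorem IsPathFromTo.eq_of_ple (hl : IsPathFromTo l (1, b + h) (a, h)) (hp : p ∈ l) (hq : q ∈ l)
    (hpq : ple b p q) : p = q := by
  have hp' := hl.mem_bounds hp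
  have hq' := hl.mem_bounds hq
  rcases hpq with hpq | hpq | hpq
  · exact hpq
  · have := hl.le_or_le hp hq
    omega
  · omega

theorem IsPathFromTo.exists_mem_modEq (ha : 0 < a) (hl : IsPathFromTo l (1, b + h) (a, h))
    (c : ℤ) : ∃ x ∈ l, x.1 - x.2 ≡ c [ZMOD a + b] := by
  obtain ⟨z, hz0, hz, hzc⟩ :=
    Int.existsUnique_equiv (c - (1 - (b + h))) (b := (a + b : ℤ)) (by omega)
  obtain ⟨x, hx, hxz⟩ := hl.exists_mem_sub_eq (c := z + (1 - (b + h))) (by simpa using hz0)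
    (by dsimp only; omega)
  exact ⟨x, hx, hxz ▸ by simpa using hzc.add_right (1 - (b + h))⟩

theorem ple_or_ple_of_modEq (hp : memP a b p) (hq : memP a b q)
    (hpq : p.1 - p.2 ≡ q.1 - q.2 [ZMOD a + b]) : ple b p q ∨ ple b q p := by
  obtain ⟨k, hk⟩ := hpq.dvd
  unfold memP at hp hq
  have hk_lt : k < 2 := by nlinarith
  have hlt_k : -2 < k := by nlinarith
  unfold ple
  rw [Prod.ext_iff, Prod.ext_iff]
  interval_cases k <;> omega

end Paths

/-- `S` contains no chain of `t + 1` points. -/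
def IsChainBounded (b t : ℕ) (S : Set (ℤ × ℤ)) : Prop :=
  ∀ c : Finset (ℤ × ℤ), (c : Set (ℤ × ℤ)) ⊆ S → IsChain (ple b) (c : Set (ℤ × ℤ)) → c.card ≤ t

section Families

variable {a b t : ℕ} {h : Fin t → ℤ} {l : Fin t → List (ℤ × ℤ)}

theorem isChainBounded_iUnion_paths (hl : ∀ i, IsPathFromTo (l i) (1, b + h i) (a, h i)) :
    IsChainBounded b t (⋃ i, {x | x ∈ l i}) := by
  intro c hcl hc
  choose f hf using fun x : c ↦ Set.mem_iUnion.1 (hcl x.2)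
  have hf_inj : Function.Injective f := by
    intro x y hxy
    have hy : y.1 ∈ l (f x) := hxy ▸ hf y
    by_contra hne
    rcases hc x.2 y.2 (Subtype.coe_injective.ne hne) with hle | hle
    · exact hne (Subtype.ext ((hl _).eq_of_ple (hf x) hy hle))
    · exact hne (Subtype.ext ((hl _).eq_of_ple hy (hf x) hle)).symm
  simpa using Fintype.card_le_of_injective f hf_inj

theorem subset_iUnion_paths_of_isChainBounded
    (hl : ∀ i, IsPathFromTo (l i) (1, b + h i) (a, h i))
    (hdisj : ∀ i j, i ≠ j → ∀ x, x ∈ l i → x ∉ l j) {S : Set (ℤ × ℤ)} (hS : ∀ p ∈ S, memP a b p)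
    (hSt : IsChainBounded b t S) (hlS : ⋃ i, {x | x ∈ l i} ⊆ S) : S ⊆ ⋃ i, {x | x ∈ l i} := by
  intro p hp
  by_contra hpl
  have ha : 0 < a := by exact_mod_cast (hS p hp).1.trans (hS p hp).2.1
  choose r hr hrp using fun i ↦ (hl i).exists_mem_modEq ha (p.1 - p.2)
  have hr_inj : Function.Injective r := fun i j hij ↦ by
    by_contra hne
    exact hdisj i j hne _ (hr i) (hij ▸ hr j)
  have hpr : p ∉ Finset.univ.image r := by
    simp only [Finset.mem_image, Finset.mem_univ, true_and, not_exists]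
    rintro i rfl
    exact hpl (Set.mem_iUnion.2 ⟨i, hr i⟩)
  have hclass : ∀ x ∈ insert p (Finset.univ.image r),
      x ∈ S ∧ x.1 - x.2 ≡ p.1 - p.2 [ZMOD a + b] := by
    simp only [Finset.forall_mem_insert, Finset.forall_mem_image]
    exact ⟨⟨hp, rfl⟩, fun i _ ↦ ⟨hlS (Set.mem_iUnion.2 ⟨i, hr i⟩), hrp i⟩⟩
  have hcard := hSt (insert p (Finset.univ.image r)) (fun x hx ↦ (hclass x hx).1)
    fun x hx y hy _ ↦ ple_or_ple_of_modEq (hS x (hclass x hx).1) (hS y (hclass y hy).1)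
      ((hclass x hx).2.trans (hclass y hy).2.symm)
  rw [Finset.card_insert_of_notMem hpr, Finset.card_image_of_injective _ hr_inj,
    Finset.card_fin] at hcard
  exact hcard.not_gt t.lt_succ_self

end Families

/-- The preorder on `ℤ × ℤ` obtained from the product order by identifying `p` with
`p + (a, -b)`. -/
def WrapLE (a b : ℕ) (p q : ℤ × ℤ) : Prop :=
  ∃ k : ℤ, p.1 + k * a ≤ q.1 ∧ p.2 ≤ q.2 + k * b

section WrapLE

variable {a b : ℕ} {p q r : ℤ × ℤ}

theorem wrapLE_of_le (h : p ≤ q) : WrapLE a b p q :=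
  ⟨0, by simpa using h.1, by simpa using h.2⟩

theorem WrapLE.trans (hpq : WrapLE a b p q) (hqr : WrapLE a b q r) : WrapLE a b p r := by
  obtain ⟨k, hk₁, hk₂⟩ := hpq
  obtain ⟨m, hm₁, hm₂⟩ := hqr
  exact ⟨k + m, by linarith, by linarith⟩

theorem wrapLE_add_right_iff : WrapLE a b (p + r) (q + r) ↔ WrapLE a b p q := by
  refine exists_congr fun k ↦ ?_
  simp only [Prod.fst_add, Prod.snd_add]
  constructor <;> rintro ⟨h₁, h₂⟩ <;> constructor <;> linarith

theorem wrapLE_add_one : WrapLE a b p (p + 1) :=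
  wrapLE_of_le (le_add_of_nonneg_right zero_le_one)

theorem not_add_one_wrapLE_self : ¬ WrapLE a b (p + 1) p := by
  rintro ⟨k, hk₁, hk₂⟩
  simp only [Prod.fst_add, Prod.snd_add, Prod.fst_one, Prod.snd_one] at hk₁ hk₂
  rcases le_total 0 k with hk | hk
  · have : 0 ≤ k * a := by positivity
    omega
  · have : k * b ≤ 0 := mul_nonpos_of_nonpos_of_nonneg hk (by positivity)
    omega

theorem memP_iff_wrapLE (hp₁ : 1 ≤ p.1) (hpa : p.1 ≤ a) :
    memP a b p ↔ WrapLE a b 1 p ∧ ¬ WrapLE a b (1, 2 * b + 1) p := by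
  have h_turns : ∀ k : ℤ, 1 + k * a ≤ p.1 → k * b ≤ 0 := by
    intro k hk
    by_contra! hkb
    have : 0 < k := pos_of_mul_pos_left hkb (by positivity)
    nlinarith
  constructor
  · rintro ⟨-, -, h₁, h₂⟩
    refine ⟨wrapLE_of_le ⟨hp₁, h₁⟩, ?_⟩
    rintro ⟨k, hk₁, hk₂⟩
    have := h_turns k hk₁
    dsimp only at hk₂
    omega
  · rintro ⟨⟨k, hk₁, hk₂⟩, htop⟩
    have := h_turns k hk₁
    have hp₂ : 1 ≤ p.2 := by
      rw [Prod.snd_one] at hk₂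
      omega
    refine ⟨hp₁, hpa, hp₂, ?_⟩
    by_contra! h
    exact htop (wrapLE_of_le ⟨hp₁, by dsimp only; omega⟩)

theorem ple_of_add_one_wrapLE (hp : memP a b p) (hq : memP a b q) (hpq : WrapLE a b (p + 1) q) :
    ple b p q := by
  obtain ⟨k, hk₁, hk₂⟩ := hpq
  simp only [Prod.fst_add, Prod.snd_add, Prod.fst_one, Prod.snd_one] at hk₁ hk₂
  obtain ⟨hp₁, -, hp₂, -⟩ := hp
  obtain ⟨-, hqa, -, hqb⟩ := hq
  have hk_neg_two : -2 < k := by nlinarith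
  have hk_one : k < 1 := by nlinarith
  unfold ple
  interval_cases k <;> omega

end WrapLE

/-- `U` is an upper set for `WrapLE a b`, that is, an upper set of `ℤ × ℤ` that is invariant under
translation by `(a, -b)`. -/
def IsWrapUpperSet (a b : ℕ) (U : Set (ℤ × ℤ)) : Prop :=
  ∀ ⦃p q⦄, WrapLE a b p q → p ∈ U → q ∈ U

/-- The rim of `U` consists of the points outside `U` whose diagonal successor lies in `U`. -/
def rim (U : Set (ℤ × ℤ)) : Set (ℤ × ℤ) := {p | p ∉ U ∧ p + 1 ∈ U}

theorem exists_not_and_succ {P : ℤ → Prop} {m n : ℤ} (hmn : m ≤ n) (hm : ¬ P m) (hn : P n) :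
    ∃ k, m ≤ k ∧ k < n ∧ ¬ P k ∧ P (k + 1) := by
  by_contra! hstep
  have hnot : ∀ k, m ≤ k → k ≤ n → ¬ P k := by
    intro k hmk
    induction k, hmk using Int.leInduction with
    | base => exact fun _ ↦ hm
    | succ k hmk ih => exact fun hkn ↦ hstep k hmk (by omega) (ih (by omega))
  exact hnot n hmn le_rfl hn

section Rim

variable {a b : ℕ} {U : Set (ℤ × ℤ)} {p q : ℤ × ℤ}

theorem IsWrapUpperSet.mem_of_le (hU : IsWrapUpperSet a b U) (hpq : p ≤ q) (hp : p ∈ U) : q ∈ U :=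
  hU (wrapLE_of_le hpq) hp

theorem IsWrapUpperSet.eq_of_mem_rim (hU : IsWrapUpperSet a b U) (hp : p ∈ rim U) (hq : q ∈ rim U)
    (hpq : p.1 - p.2 = q.1 - q.2) : p = q := by
  have hle : ∀ {x y : ℤ × ℤ}, x ∈ rim U → y ∈ rim U → x.1 - x.2 = y.1 - y.2 → y.1 ≤ x.1 := by
    intro x y hx hy hxy
    by_contra! hlt
    refine hy.1 (hU.mem_of_le ⟨?_, ?_⟩ hx.2) <;>
      simp only [Prod.fst_add, Prod.snd_add, Prod.fst_one, Prod.snd_one] <;> omega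
  have h₁ := hle hp hq hpq
  have h₂ := hle hq hp hpq.symm
  ext <;> omega

theorem IsWrapUpperSet.step_of_mem_rim (hU : IsWrapUpperSet a b U) (hp : p ∈ rim U)
    (hq : q ∈ rim U) (hpq : q.1 - q.2 = p.1 - p.2 + 1) : Step p q := by
  by_cases hright : p + (1, 0) ∈ U
  · have hleft : p + (0, -1) ∈ rim U := by
      refine ⟨fun h ↦ hp.1 (hU.mem_of_le (by simp [Prod.le_def]) h), ?_⟩
      convert hright using 1
      ext <;> simp
    refine Or.inr (hU.eq_of_mem_rim hq hleft ?_)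
    simp only [Prod.fst_add, Prod.snd_add]
    omega
  · have hright_rim : p + (1, 0) ∈ rim U :=
      ⟨hright, hU.mem_of_le (by simp [Prod.le_def]) hp.2⟩
    refine Or.inl (hU.eq_of_mem_rim hq hright_rim ?_)
    simp only [Prod.fst_add, Prod.snd_add]
    omega

theorem IsWrapUpperSet.exists_mem_rim_sub_eq (hU : IsWrapUpperSet a b U)
    (htop : (1, 2 * (b : ℤ) + 1) ∈ U) (hbot : ∀ p, p + 1 ∈ U → WrapLE a b 1 p) (c : ℤ) :
    ∃ p ∈ rim U, p.1 - p.2 = c := by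
  have hlow : (c + (min 0 (-c) + 1), min 0 (-c) + 1) ∉ U := by
    intro h
    obtain ⟨k, hk₁, hk₂⟩ := hbot (c + min 0 (-c), min 0 (-c))
      (by simpa [Prod.one_eq_mk, add_assoc] using h)
    simp only [Prod.fst_one, Prod.snd_one] at hk₁ hk₂
    rcases le_total 0 k with hk | hk
    · have : 0 ≤ k * a := by positivity
      omega
    · have : k * b ≤ 0 := mul_nonpos_of_nonpos_of_nonneg hk (by positivity)
      omega
  have hhigh : (c + max (1 - c) (2 * b + 1), max (1 - c) (2 * b + 1)) ∈ U :=
    hU.mem_of_le ⟨by dsimp only; omega, by simp⟩ htop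
  obtain ⟨y, -, -, hy, hy'⟩ :=
    exists_not_and_succ (P := fun y ↦ (c + y, y) ∈ U) (by omega) hlow hhigh
  exact ⟨(c + y, y), ⟨hy, by simpa [Prod.one_eq_mk, add_assoc] using hy'⟩, by simp⟩

theorem exists_start_height (htop : (1, 2 * (b : ℤ) + 1) ∈ U)
    (hbot : ∀ p, p + 1 ∈ U → WrapLE a b 1 p) :
    ∃ h : ℕ, (1 ≤ h ∧ h ≤ b) ∧ (1, (b : ℤ) + h) ∉ U ∧ (1, (b : ℤ) + h + 1) ∈ U := by
  have hlow : (1, (b : ℤ) + 1) ∉ U := by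
    intro h
    obtain ⟨k, hk₁, hk₂⟩ := hbot (0, b) (by simpa [Prod.one_eq_mk] using h)
    simp only [Prod.fst_one, Prod.snd_one] at hk₁ hk₂
    have hk : k < 0 := by nlinarith
    nlinarith
  obtain ⟨y, hby, hyb, hy, hy'⟩ :=
    exists_not_and_succ (P := fun y ↦ (1, y) ∈ U) (by omega) hlow htop
  obtain ⟨h, rfl⟩ := Int.le.dest (show (b : ℤ) ≤ y by omega)
  exact ⟨h, by omega, hy, hy'⟩

theorem IsWrapUpperSet.exists_path (ha : 0 < a) (hU : IsWrapUpperSet a b U)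
    (htop : (1, 2 * (b : ℤ) + 1) ∈ U) (hbot : ∀ p, p + 1 ∈ U → WrapLE a b 1 p) :
    ∃ h : ℕ, (1 ≤ h ∧ h ≤ b) ∧ ∃ l, IsPathFromTo l (1, (b : ℤ) + h) (a, h) ∧
      ∀ x, x ∈ l ↔ x ∈ rim U ∧ 1 ≤ x.1 ∧ x.1 ≤ a := by
  obtain ⟨h, hh, hstart, hstart'⟩ := exists_start_height htop hbot
  have hend : ((a : ℤ) + 1, (h : ℤ)) ∉ U := fun hmem ↦
    hstart (hU ⟨-1, by simp, by simp⟩ hmem)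
  have hend' : ((a : ℤ) + 1, (h : ℤ) + 1) ∈ U :=
    hU ⟨1, by simp [add_comm], by dsimp only; omega⟩ hstart'
  have hp : (1, (b : ℤ) + h) ∈ rim U := ⟨hstart, hU.mem_of_le (by simp [Prod.le_def]) hstart'⟩
  have hq : ((a : ℤ), (h : ℤ)) ∈ rim U :=
    ⟨fun hmem ↦ hend (hU.mem_of_le (by simp [Prod.le_def]) hmem),
      by simpa [Prod.one_eq_mk] using hend'⟩
  choose r hr hrc using hU.exists_mem_rim_sub_eq htop hbot
  have hr_eq : ∀ x ∈ rim U, ∀ c, x.1 - x.2 = c → r c = x := fun x hx c hxc ↦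
    hU.eq_of_mem_rim (hr c) hx (by rw [hrc, hxc])
  let f (n : ℕ) : ℤ × ℤ := r (1 - (b + h) + n)
  have hf : ∀ n, Step (f n) (f (n + 1)) := fun n ↦
    hU.step_of_mem_rim (hr _) (hr _) (by simp only [f, hrc]; push_cast; ring)
  have hl := isPathFromTo_map_range hf (a + b - 1)
  rw [show f 0 = _ from hr_eq _ hp _ (by simp),
    show f (a + b - 1) = _ from hr_eq _ hq _ (by push_cast [show 1 ≤ a + b by omega]; ring)] at hl
  refine ⟨h, hh, _, hl, fun x ↦ ⟨fun hx ↦ ⟨?_, (hl.mem_bounds hx).1⟩, ?_⟩⟩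
  · obtain ⟨n, -, rfl⟩ := List.mem_map.1 hx
    exact hr _
  · rintro ⟨hx, hx₁, hxa⟩
    have hle_start : x.2 ≤ b + h := by
      by_contra! hlt
      exact hx.1 (hU.mem_of_le ⟨hx₁, by dsimp only; omega⟩ hstart')
    have hend_le : h ≤ x.2 := by
      by_contra! hlt
      exact hend (hU.mem_of_le ⟨by simpa using hxa, by simpa using hlt⟩ hx.2)
    refine List.mem_map.2 ⟨(x.1 - x.2 - (1 - (b + h))).toNat, List.mem_range.2 (by omega),
      hr_eq x hx _ (by omega)⟩

end Rim

/-- Points from which `t - i` diagonal steps lead above `P`. -/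
def nearTop (a b t i : ℕ) : Set (ℤ × ℤ) :=
  {p | WrapLE a b ((1, 2 * (b : ℤ) + 1) + (i : ℤ × ℤ)) (p + (t : ℤ × ℤ))}

/-- The points that lie strictly above a chain of `i` points of `S`, enlarged by the points that are
too close to the top of `P` to be the bottom of a further `t - i + 1` points. Index `0` gives all
points above the bottom of `P`. -/
def upperLevel (a b t : ℕ) (S : Set (ℤ × ℤ)) : ℕ → Set (ℤ × ℤ)
  | 0 => {p | WrapLE a b 1 p}
  | i + 1 => {p | ∃ q ∈ S, q ∈ upperLevel a b t S i ∧ WrapLE a b (q + 1) p} ∪ nearTop a b t (i + 1)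

section UpperLevel

variable {a b t i : ℕ} {S : Set (ℤ × ℤ)} {p q : ℤ × ℤ}

theorem nearTop_self : nearTop a b t t = {p | WrapLE a b (1, 2 * (b : ℤ) + 1) p} := by
  ext p
  exact wrapLE_add_right_iff

theorem isWrapUpperSet_nearTop : IsWrapUpperSet a b (nearTop a b t i) :=
  fun _ _ hpq hp ↦ hp.trans (wrapLE_add_right_iff.2 hpq)

theorem add_one_mem_nearTop_succ_iff : p + 1 ∈ nearTop a b t (i + 1) ↔ p ∈ nearTop a b t i := by
  have h_comm : p + 1 + (t : ℤ × ℤ) = p + t + 1 := add_right_comm _ _ _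
  rw [nearTop, Set.mem_ofPred_eq, Nat.cast_succ, ← add_assoc, h_comm]
  exact wrapLE_add_right_iff

theorem nearTop_zero_subset (hta : t ≤ a) (htb : t ≤ b) :
    nearTop a b t 0 ⊆ {p | WrapLE a b 1 p} := by
  rintro p ⟨k, hk₁, hk₂⟩
  simp only [Prod.fst_add, Prod.snd_add, Prod.fst_natCast, Prod.snd_natCast, Nat.cast_zero,
    Prod.fst_zero, Prod.snd_zero] at hk₁ hk₂
  refine ⟨k - 1, ?_, ?_⟩ <;> rw [sub_one_mul] <;> simp only [Prod.fst_one, Prod.snd_one] <;> omega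

theorem isWrapUpperSet_upperLevel : ∀ i, IsWrapUpperSet a b (upperLevel a b t S i)
  | 0 => fun _ _ hpq hp ↦ hp.trans hpq
  | _ + 1 => by
    rintro p q hpq (⟨r, hr, hri, hrp⟩ | hp)
    · exact Or.inl ⟨r, hr, hri, hrp.trans hpq⟩
    · exact Or.inr (isWrapUpperSet_nearTop hpq hp)

theorem nearTop_subset_upperLevel (hta : t ≤ a) (htb : t ≤ b) :
    ∀ i, nearTop a b t i ⊆ upperLevel a b t S i
  | 0 => nearTop_zero_subset hta htb
  | _ + 1 => Set.subset_union_right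

theorem mem_upperLevel_of_add_one_mem (hta : t ≤ a) (htb : t ≤ b)
    (hp : p + 1 ∈ upperLevel a b t S (i + 1)) : p ∈ upperLevel a b t S i := by
  rcases hp with ⟨q, -, hqi, hqp⟩ | hp
  · exact isWrapUpperSet_upperLevel i (wrapLE_add_right_iff.1 hqp) hqi
  · exact nearTop_subset_upperLevel hta htb i (add_one_mem_nearTop_succ_iff.1 hp)

theorem antitone_upperLevel (hta : t ≤ a) (htb : t ≤ b) : Antitone (upperLevel a b t S) :=
  antitone_nat_of_succ_le fun i _ hp ↦ mem_upperLevel_of_add_one_mem hta htb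
    (isWrapUpperSet_upperLevel (i + 1) wrapLE_add_one hp)

theorem top_mem_upperLevel (hta : t ≤ a) (htb : t ≤ b) (hi : i ≤ t) :
    (1, 2 * (b : ℤ) + 1) ∈ upperLevel a b t S i :=
  nearTop_subset_upperLevel hta htb i
    (wrapLE_of_le (add_le_add_right (Nat.cast_le.2 hi) _))

theorem wrapLE_one_of_add_one_mem_upperLevel (hta : t ≤ a) (htb : t ≤ b)
    (hp : p + 1 ∈ upperLevel a b t S (i + 1)) : WrapLE a b 1 p :=
  antitone_upperLevel hta htb i.zero_le (mem_upperLevel_of_add_one_mem hta htb hp)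

theorem rim_upperLevel_subset (hta : t ≤ a) (htb : t ≤ b) {j : ℕ} (hij : i < j) :
    rim (upperLevel a b t S (j + 1)) ⊆ upperLevel a b t S (i + 1) := fun _ hp ↦
  antitone_upperLevel hta htb hij (mem_upperLevel_of_add_one_mem hta htb hp.2)

theorem exists_chain_of_mem_upperLevel (hS : ∀ p ∈ S, memP a b p) (hq : q ∈ S)
    (hqi : q ∈ upperLevel a b t S i) (hq_top : q ∉ nearTop a b t i) :
    ∃ c : Finset (ℤ × ℤ), c.card = i + 1 ∧ (c : Set (ℤ × ℤ)) ⊆ S ∧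
      IsChain (ple b) (c : Set (ℤ × ℤ)) ∧ ∀ r ∈ c, WrapLE a b r q := by
  induction i generalizing q with
  | zero => exact ⟨{q}, by simp, by simpa, by simp, by simpa using wrapLE_of_le le_rfl⟩
  | succ i ih =>
    obtain ⟨r, hr, hri, hrq⟩ := hqi.resolve_right hq_top
    have hr_top : r ∉ nearTop a b t i := fun h ↦
      hq_top (isWrapUpperSet_nearTop hrq (add_one_mem_nearTop_succ_iff.2 h))
    obtain ⟨c, hcard, hcS, hc, hcr⟩ := ih hr hri hr_top
    have hcq : ∀ s ∈ c, WrapLE a b (s + 1) q := fun s hs ↦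
      (wrapLE_add_right_iff.2 (hcr s hs)).trans hrq
    have hqc : q ∉ c := fun h ↦ not_add_one_wrapLE_self (hcq q h)
    refine ⟨insert q c, by rw [Finset.card_insert_of_notMem hqc, hcard], ?_, ?_, ?_⟩
    · simpa [Set.insert_subset_iff, hq] using hcS
    · rw [Finset.coe_insert]
      exact hc.insert fun s hs _ ↦
        Or.inr (ple_of_add_one_wrapLE (hS s (hcS hs)) (hS q hq) (hcq s hs))
    · simp only [Finset.forall_mem_insert]
      exact ⟨wrapLE_of_le le_rfl, fun s hs ↦ wrapLE_add_one.trans (hcq s hs)⟩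

theorem notMem_upperLevel_of_isChainBounded (hS : ∀ p ∈ S, memP a b p)
    (hSt : IsChainBounded b t S) (hp : p ∈ S) : p ∉ upperLevel a b t S t := by
  intro hpt
  have hp_top : p ∉ nearTop a b t t := by
    rw [nearTop_self]
    exact ((memP_iff_wrapLE (hS p hp).1 (hS p hp).2.1).1 (hS p hp)).2
  obtain ⟨c, hcard, hcS, hc, -⟩ := exists_chain_of_mem_upperLevel hS hp hpt hp_top
  have := hSt c hcS hc
  omega

theorem exists_mem_rim_upperLevel (hS : ∀ p ∈ S, memP a b p) (hSt : IsChainBounded b t S)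
    (hp : p ∈ S) : ∃ i : Fin t, p ∈ rim (upperLevel a b t S (i + 1)) := by
  have hp_zero : p ∈ upperLevel a b t S 0 :=
    ((memP_iff_wrapLE (hS p hp).1 (hS p hp).2.1).1 (hS p hp)).1
  by_contra! h
  have hp_mem : ∀ i ≤ t, p ∈ upperLevel a b t S i := by
    intro i
    induction i with
    | zero => exact fun _ ↦ hp_zero
    | succ i ih =>
      intro hi
      by_contra hpi
      exact h ⟨i, hi⟩ ⟨hpi, Or.inl ⟨p, hp, ih (by omega), wrapLE_of_le le_rfl⟩⟩
  exact notMem_upperLevel_of_isChainBounded hS hSt hp (hp_mem t le_rfl)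

theorem exists_disjoint_paths_cover (hta : t ≤ a) (htb : t ≤ b)
    (hS : ∀ p ∈ S, memP a b p) (hSt : IsChainBounded b t S) :
    ∃ h : Fin t → ℕ, StrictMono h ∧ (∀ i, 1 ≤ h i ∧ h i ≤ b) ∧
      ∃ l : Fin t → List (ℤ × ℤ), (∀ i, IsPathFromTo (l i) (1, (b : ℤ) + h i) (a, h i)) ∧
        (∀ i j, i ≠ j → ∀ x, x ∈ l i → x ∉ l j) ∧ S ⊆ ⋃ i, {x | x ∈ l i} := by
  have hU : ∀ i, IsWrapUpperSet a b (upperLevel a b t S i) := isWrapUpperSet_upperLevel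
  choose h hh l hl hmem using fun i : Fin t ↦ (hU (i + 1)).exists_path
    (i.pos.trans_le hta) (top_mem_upperLevel hta htb i.2)
    fun _ ↦ wrapLE_one_of_add_one_mem_upperLevel hta htb
  have hrim : ∀ {i x}, x ∈ l i → x ∈ rim (upperLevel a b t S (i + 1)) := fun hx ↦
    ((hmem _ _).1 hx).1
  have hlater : ∀ i j, i < j → ∀ x ∈ l j, x ∈ upperLevel a b t S (i + 1) := fun i j hij x hx ↦
    rim_upperLevel_subset hta htb hij (hrim hx)
  refine ⟨h, fun i j hij ↦ ?_, hh, l, hl, fun i j hij x hxi hxj ↦ ?_, fun p hp ↦ ?_⟩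
  · by_contra! hji
    have hstart := hlater i j hij _ (hl j).start_mem
    exact (hrim (hl i).start_mem).1 ((hU _).mem_of_le (by simpa [Prod.le_def]) hstart)
  · rcases lt_or_gt_of_ne hij with hlt | hlt
    · exact (hrim hxi).1 (hlater i j hlt x hxj)
    · exact (hrim hxj).1 (hlater j i hlt x hxi)
  · obtain ⟨i, hi⟩ := exists_mem_rim_upperLevel hS hSt hp
    exact Set.mem_iUnion.2 ⟨i, (hmem i p).2 ⟨hi, (hS p hp).1, (hS p hp).2.1⟩⟩

end UpperLevel

theorem stmt_16_general (a b t : ℕ) (hta : t ≤ a) (htb : t ≤ b)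
    (S : Set (ℤ × ℤ)) (hS : ∀ p ∈ S, memP a b p) :
    ((∀ c : Finset (ℤ × ℤ), (c : Set (ℤ × ℤ)) ⊆ S → IsChain (ple b) (c : Set (ℤ × ℤ)) →
        c.card ≤ t) ∧
      ∀ S' : Set (ℤ × ℤ), (∀ p ∈ S', memP a b p) →
        (∀ c : Finset (ℤ × ℤ), (c : Set (ℤ × ℤ)) ⊆ S' → IsChain (ple b) (c : Set (ℤ × ℤ)) →
          c.card ≤ t) → S ⊆ S' → S = S') ↔
    ∃ h : Fin t → ℕ, StrictMono h ∧ (∀ i, 1 ≤ h i ∧ h i ≤ b) ∧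
      ∃ l : Fin t → List (ℤ × ℤ),
        (∀ i, IsPathFromTo (l i) (1, (b : ℤ) + (h i : ℤ)) ((a : ℤ), (h i : ℤ))) ∧
        (∀ i j, i ≠ j → ∀ x, x ∈ l i → x ∉ l j) ∧
        S = ⋃ i, {x | x ∈ l i} := by
  constructor
  · rintro ⟨hSt, hmax⟩
    obtain ⟨h, hmono, hh, l, hl, hdisj, hSl⟩ := exists_disjoint_paths_cover hta htb hS hSt
    refine ⟨h, hmono, hh, l, hl, hdisj,
      hmax _ (fun p hp ↦ ?_) (isChainBounded_iUnion_paths hl) hSl⟩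
    obtain ⟨i, hi⟩ := Set.mem_iUnion.1 hp
    exact (hl i).memP_of_mem (by exact_mod_cast hh i) hi
  · rintro ⟨h, -, -, l, hl, hdisj, rfl⟩
    exact ⟨isChainBounded_iUnion_paths hl, fun S' hS' hSt' hsub ↦
      hsub.antisymm (subset_iUnion_paths_of_isChainBounded hl hdisj hS' hSt' hsub)⟩

theorem stmt_16 (a b t : ℕ) (ha : 2 ≤ a) (hab : a ≤ b) (ht1 : 1 ≤ t) (hta : t ≤ a - 1)
    (S : Set (ℤ × ℤ)) (hS : ∀ p ∈ S, memP a b p) :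
    ((∀ c : Finset (ℤ × ℤ), (c : Set (ℤ × ℤ)) ⊆ S → IsChain (ple b) (c : Set (ℤ × ℤ)) →
        c.card ≤ t) ∧
      ∀ S' : Set (ℤ × ℤ), (∀ p ∈ S', memP a b p) →
        (∀ c : Finset (ℤ × ℤ), (c : Set (ℤ × ℤ)) ⊆ S' → IsChain (ple b) (c : Set (ℤ × ℤ)) →
          c.card ≤ t) → S ⊆ S' → S = S') ↔
    ∃ h : Fin t → ℕ, StrictMono h ∧ (∀ i, 1 ≤ h i ∧ h i ≤ b) ∧
      ∃ l : Fin t → List (ℤ × ℤ),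
        (∀ i, IsPathFromTo (l i) (1, (b : ℤ) + (h i : ℤ)) ((a : ℤ), (h i : ℤ))) ∧
        (∀ i j, i ≠ j → ∀ x, x ∈ l i → x ∉ l j) ∧
        S = ⋃ i, {x | x ∈ l i} :=
  stmt_16_general a b t (by omega) (by omega) S hS
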